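/- A finite tree Γ has index r = 2 if and only if Γ is isomorphic to one of the extended Dynkin diagrams D̃_n (n ≥ 4), Ẽ_6, Ẽ_7, Ẽ_8. -/

import Mathlib

/-- `μ` is an eigenvalue of the real matrix `A`. -/
def IsEigen {n : Type*} [Fintype n] (A : Matrix n n ℝ) (μ : ℝ) : Prop :=
  ∃ v : n → ℝ, v ≠ 0 ∧ A.mulVec v = μ • v

/-- The extended Dynkin diagram D̃ₙ on n+1 vertices: central path 2 − ⋯ − (n−2) with
leaves 0, 1 attached to vertex 2 and leaves n−1, n attached to vertex n−2. -/
def DtildeGraph (n : ℕ) : SimpleGraph (Fin (n + 1)) :=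
  SimpleGraph.fromRel fun i j =>
    ((i : ℕ) = 0 ∧ (j : ℕ) = 2) ∨ ((i : ℕ) = 1 ∧ (j : ℕ) = 2) ∨
      (2 ≤ (i : ℕ) ∧ (j : ℕ) = (i : ℕ) + 1 ∧ (j : ℕ) ≤ n - 2) ∨
      ((i : ℕ) = n - 2 ∧ (j : ℕ) = n - 1) ∨ ((i : ℕ) = n - 2 ∧ (j : ℕ) = n)

/-- The extended Dynkin diagram Ẽ₆: path 0 − ⋯ − 4, branch 2 − 5 − 6. -/
def E6tGraph : SimpleGraph (Fin 7) :=
  SimpleGraph.fromRel fun i j =>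
    ((i : ℕ) + 1 = (j : ℕ) ∧ (j : ℕ) ≤ 4) ∨ ((i : ℕ) = 2 ∧ (j : ℕ) = 5) ∨
      ((i : ℕ) = 5 ∧ (j : ℕ) = 6)

/-- The extended Dynkin diagram Ẽ₇: path 0 − ⋯ − 6, leaf 7 attached to vertex 3. -/
def E7tGraph : SimpleGraph (Fin 8) :=
  SimpleGraph.fromRel fun i j =>
    ((i : ℕ) + 1 = (j : ℕ) ∧ (j : ℕ) ≤ 6) ∨ ((i : ℕ) = 3 ∧ (j : ℕ) = 7)

/-- The extended Dynkin diagram Ẽ₈: path 0 − ⋯ − 7, leaf 8 attached to vertex 2. -/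
def E8tGraph : SimpleGraph (Fin 9) :=
  SimpleGraph.fromRel fun i j =>
    ((i : ℕ) + 1 = (j : ℕ) ∧ (j : ℕ) ≤ 7) ∨ ((i : ℕ) = 2 ∧ (j : ℕ) = 8)

/-!
A connected finite graph has index `r` exactly when it carries a positive eigenfunction of its
adjacency operator with eigenvalue `r`. The extended Dynkin diagrams carry such functions with
`r = 2`. Pairing two such functions shows that a finite graph contained in a connected graph with
the same eigenvalue is the whole graph, so it suffices to find an extended Dynkin diagram inside
every finite tree with a positive `2`-eigenfunction `u`. A vertex of degree at least four, or two
vertices of degree at least three joined by a path, give some D̃ₙ. Otherwise the tree consists of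
legs issuing from one vertex `c`. Along a leg of length `p` the function `u` is affine and, by the
equation at the leaf, would vanish one step beyond it; its first decrement is therefore
`u c / (p + 1)`. The equation at `c` now reads `∑ 1 / (p + 1) = deg c - 2`, which forces three legs
whose lengths dominate `(2, 2, 2)`, `(1, 3, 3)` or `(1, 2, 5)`, the lengths of the legs of Ẽ₆, Ẽ₇
and Ẽ₈.
-/

open Finset
open scoped Matrix SimpleGraph

section Matrix

variable {V : Type*} [Fintype V] {A : Matrix V V ℝ} {r s : ℝ}

lemma isEigen_iff_mem_spectrum [DecidableEq V] : IsEigen A r ↔ r ∈ spectrum ℝ A := by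
  rw [← Matrix.spectrum_toLin', ← Module.End.hasEigenvalue_iff_mem_spectrum]
  constructor
  · rintro ⟨v, hv0, hv⟩
    exact Module.End.hasEigenvalue_of_hasEigenvector
      ⟨Module.End.mem_eigenspace_iff.mpr (by rwa [Matrix.toLin'_apply]), hv0⟩
  · intro h
    obtain ⟨v, hv⟩ := h.exists_hasEigenvector
    exact ⟨v, hv.2, by rw [← Matrix.toLin'_apply, hv.apply_eq_smul]⟩

lemma posSemidef_scalar_sub_of_isEigen_le [DecidableEq V] (hA : A.IsHermitian)
    (hr : ∀ μ, IsEigen A μ → μ ≤ r) : (algebraMap ℝ (Matrix V V ℝ) r - A).PosSemidef := by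
  refine Matrix.posSemidef_iff_isHermitian_and_spectrum_nonneg.mpr ⟨?_, ?_⟩
  · exact (Matrix.isHermitian_diagonal _).sub hA
  · rw [← spectrum.singleton_sub_eq]
    rintro _ ⟨_, rfl, μ, hμ, rfl⟩
    exact sub_nonneg.mpr (hr μ (isEigen_iff_mem_spectrum.mpr hμ))

-- The quadratic form of `r - A` is nonnegative, and replacing `w` by `|w|` can only decrease it.
lemma mulVec_abs_eq_smul_abs_of_isEigen_le (hA : A.IsHermitian) (h0 : ∀ i j, 0 ≤ A i j)
    (hr : ∀ μ, IsEigen A μ → μ ≤ r) {w : V → ℝ} (hw : A *ᵥ w = r • w) :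
    A *ᵥ |w| = r • |w| := by
  classical
  set B := algebraMap ℝ (Matrix V V ℝ) r - A with hB
  have hBmul (z : V → ℝ) : B *ᵥ z = r • z - A *ᵥ z := by
    rw [hB, Matrix.sub_mulVec, Algebra.algebraMap_eq_smul_one, Matrix.smul_mulVec,
      Matrix.one_mulVec]
  have hBpos : B.PosSemidef := posSemidef_scalar_sub_of_isEigen_le hA hr
  have hform : |w| ⬝ᵥ B *ᵥ |w| ≤ w ⬝ᵥ B *ᵥ w := by
    have hsq : |w| ⬝ᵥ |w| = w ⬝ᵥ w := by simp [dotProduct]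
    have hle : w ⬝ᵥ A *ᵥ w ≤ |w| ⬝ᵥ A *ᵥ |w| := by
      simp only [dotProduct, Matrix.mulVec, mul_sum, Pi.abs_apply]
      refine sum_le_sum fun i _ ↦ sum_le_sum fun j _ ↦ ?_
      calc w i * (A i j * w j) ≤ |w i * (A i j * w j)| := le_abs_self _
        _ = |w i| * (A i j * |w j|) := by rw [abs_mul, abs_mul, abs_of_nonneg (h0 i j)]
    simp only [hBmul, dotProduct_sub, dotProduct_smul, hsq]
    gcongr
  have hzero : star |w| ⬝ᵥ B *ᵥ |w| = 0 := by
    refine le_antisymm ?_ (hBpos.dotProduct_mulVec_nonneg |w|)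
    rwa [hBmul w, hw, sub_self, dotProduct_zero] at hform
  have hker := (hBpos.dotProduct_mulVec_zero_iff |w|).mp hzero
  rw [hBmul, sub_eq_zero] at hker
  exact hker.symm

lemma IsEigen.le_of_vecMul_eq_smul (hr : IsEigen A r) (h0 : ∀ i j, 0 ≤ A i j) {u : V → ℝ}
    (hpos : ∀ i, 0 < u i) (hu : u ᵥ* A = s • u) : r ≤ s := by
  obtain ⟨w, hw0, hw⟩ := hr
  have habs : r • |w| ≤ A *ᵥ |w| := fun i ↦ by
    calc r * |w i| ≤ |r * w i| := by rw [abs_mul]; gcongr; exact le_abs_self r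
      _ = |(A *ᵥ w) i| := by rw [hw]; rfl
      _ ≤ ∑ j, |A i j * w j| := abs_sum_le_sum_abs _ _
      _ = (A *ᵥ |w|) i := by simp [Matrix.mulVec, dotProduct, abs_mul, abs_of_nonneg (h0 i _)]
  have hdot : 0 < u ⬝ᵥ |w| := by
    obtain ⟨i, hi⟩ := Function.ne_iff.mp hw0
    exact sum_pos' (fun j _ ↦ mul_nonneg (hpos j).le (abs_nonneg _))
      ⟨i, mem_univ i, mul_pos (hpos i) (abs_pos.mpr hi)⟩
  refine le_of_mul_le_mul_right ?_ hdot
  calc r * (u ⬝ᵥ |w|) = u ⬝ᵥ (r • |w|) := by rw [dotProduct_smul, smul_eq_mul]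
    _ ≤ u ⬝ᵥ A *ᵥ |w| := dotProduct_le_dotProduct_of_nonneg_left habs fun i ↦ (hpos i).le
    _ = s * (u ⬝ᵥ |w|) := by rw [Matrix.dotProduct_mulVec, hu, smul_dotProduct, smul_eq_mul]

end Matrix

section Perron

variable {V W : Type*}

/-- A Perron vector of `G` with eigenvalue `r`: a positive function on the vertices that is an
eigenfunction of the adjacency operator. Stated through neighbour sums, so that it makes sense for
every locally finite graph. -/
structure IsPerronVector (G : SimpleGraph V) [G.LocallyFinite] (r : ℝ) (u : V → ℝ) : Prop where
  pos : ∀ x, 0 < u x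
  sum_neighborFinset : ∀ x, ∑ y ∈ G.neighborFinset x, u y = r * u x

variable {G : SimpleGraph V} {H : SimpleGraph W} {r : ℝ} {u : V → ℝ}

lemma IsPerronVector.comp_iso [G.LocallyFinite] [H.LocallyFinite] {d : W → ℝ}
    (hd : IsPerronVector H r d) (e : G ≃g H) : IsPerronVector G r (d ∘ e) where
  pos x := hd.pos (e x)
  sum_neighborFinset x := by
    rw [Function.comp_apply, ← hd.sum_neighborFinset]
    exact sum_equiv e.toEquiv (by simp [e.map_adj_iff]) (by simp)

lemma isPerronVector_natCast [G.LocallyFinite] {k : ℕ} {d : V → ℕ} (hpos : ∀ x, 0 < d x)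
    (hsum : ∀ x, ∑ y ∈ G.neighborFinset x, d y = k * d x) :
    IsPerronVector G k (fun x ↦ d x) where
  pos x := Nat.cast_pos.mpr (hpos x)
  sum_neighborFinset x := by exact_mod_cast hsum x

lemma pos_of_sum_neighborFinset_eq [G.LocallyFinite] (hG : G.Preconnected) (hnonneg : 0 ≤ u)
    (hne : u ≠ 0) (hsum : ∀ x, ∑ y ∈ G.neighborFinset x, u y = r * u x) (x : V) : 0 < u x := by
  refine (hnonneg x).lt_of_ne' fun hx ↦ hne (funext fun z ↦ ?_)
  obtain ⟨p⟩ := hG z x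
  induction p with
  | nil => exact hx
  | @cons a b _ hab _ ih =>
    have hb := hsum b
    rw [ih hx, Pi.zero_apply, mul_zero, sum_eq_zero_iff_of_nonneg fun y _ ↦ hnonneg y] at hb
    exact hb a ((G.mem_neighborFinset b a).mpr hab.symm)

lemma adjMatrix_nonneg [DecidableRel G.Adj] (x y : V) : 0 ≤ G.adjMatrix ℝ x y := by
  rw [SimpleGraph.adjMatrix_apply]
  split_ifs <;> norm_num

variable [Fintype V] [DecidableRel G.Adj]

lemma adjMatrix_mulVec_eq_smul_iff :
    G.adjMatrix ℝ *ᵥ u = r • u ↔ ∀ x, ∑ y ∈ G.neighborFinset x, u y = r * u x := by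
  simp only [funext_iff, SimpleGraph.adjMatrix_mulVec_apply, Pi.smul_apply, smul_eq_mul]

lemma IsPerronVector.isGreatest_isEigen [Nonempty V] (hu : IsPerronVector G r u) :
    IsGreatest {μ | IsEigen (G.adjMatrix ℝ) μ} r := by
  have hmul := adjMatrix_mulVec_eq_smul_iff.mpr hu.sum_neighborFinset
  refine ⟨⟨u, ?_, hmul⟩, fun μ hμ ↦ hμ.le_of_vecMul_eq_smul adjMatrix_nonneg hu.pos ?_⟩
  · obtain ⟨x⟩ := ‹Nonempty V›
    exact fun h ↦ (hu.pos x).ne' (congrFun h x)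
  · rw [← Matrix.mulVec_transpose, SimpleGraph.transpose_adjMatrix, hmul]

theorem isGreatest_isEigen_iff_exists_isPerronVector (hG : G.Connected) :
    IsGreatest {μ | IsEigen (G.adjMatrix ℝ) μ} r ↔ ∃ u, IsPerronVector G r u := by
  have := hG.nonempty
  refine ⟨fun ⟨⟨w, hw0, hw⟩, hmax⟩ ↦ ?_, fun ⟨u, hu⟩ ↦ hu.isGreatest_isEigen⟩
  have hsymm : (G.adjMatrix ℝ).IsHermitian := by
    rw [Matrix.IsHermitian, Matrix.conjTranspose_eq_transpose_of_trivial,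
      SimpleGraph.transpose_adjMatrix]
  have hsum := adjMatrix_mulVec_eq_smul_iff.mp
    (mulVec_abs_eq_smul_abs_of_isEigen_le hsymm adjMatrix_nonneg (fun μ hμ ↦ hmax hμ) hw)
  exact ⟨|w|, pos_of_sum_neighborFinset_eq hG.preconnected (abs_nonneg w) (by simpa using hw0)
    hsum, hsum⟩

end Perron

section Containment

variable {V W : Type*} {G : SimpleGraph V} {H : SimpleGraph W}

lemma surjective_of_surjOn_neighborSet [Nonempty W] (hG : G.Preconnected) {f : W → V}
    (hf : ∀ x, Set.SurjOn f (H.neighborSet x) (G.neighborSet (f x))) : Function.Surjective f := by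
  obtain ⟨w⟩ := ‹Nonempty W›
  intro z
  obtain ⟨p⟩ := hG z (f w)
  generalize hv : f w = v at p
  induction p with
  | nil => exact ⟨w, hv⟩
  | cons hab _ ih =>
    obtain ⟨t, rfl⟩ := ih hv
    obtain ⟨s, -, hs⟩ := hf t hab.symm
    exact ⟨s, hs⟩

lemma sum_mul_sum_neighborFinset_comm {R : Type*} [CommSemiring R] [Fintype W] [H.LocallyFinite]
    (a b : W → R) :
    ∑ x, a x * ∑ y ∈ H.neighborFinset x, b y = ∑ x, b x * ∑ y ∈ H.neighborFinset x, a y := by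
  simp only [mul_sum]
  rw [sum_comm' (t' := univ) (s' := fun y ↦ H.neighborFinset y) (by simp [H.adj_comm])]
  simp only [mul_comm]

variable [Finite W] [G.LocallyFinite] [H.LocallyFinite] {r : ℝ} {u : V → ℝ} {d : W → ℝ}

-- At each vertex of `H` the pulled back `u` has neighbour sum at most `r` times its value; pairing
-- with `d` shows that the defects add up to zero.
lemma sum_neighborFinset_comp_eq (hu : IsPerronVector G r u) (hd : IsPerronVector H r d)
    (f : H →g G) (hf : Function.Injective f) (x : W) :
    ∑ y ∈ H.neighborFinset x, u (f y) = r * u (f x) := by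
  classical
  have := Fintype.ofFinite W
  have hle (x : W) : ∑ y ∈ H.neighborFinset x, u (f y) ≤ r * u (f x) := by
    rw [← sum_image (g := f) (f := u) hf.injOn, ← hu.sum_neighborFinset]
    refine sum_le_sum_of_subset_of_nonneg ?_ fun y _ _ ↦ (hu.pos y).le
    simpa [image_subset_iff] using fun y ↦ f.map_adj
  have htotal : ∑ x, d x * ∑ y ∈ H.neighborFinset x, u (f y) = ∑ x, d x * (r * u (f x)) := by
    rw [sum_mul_sum_neighborFinset_comm]
    exact sum_congr rfl fun x _ ↦ by rw [hd.sum_neighborFinset]; ring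
  have heq := (sum_eq_sum_iff_of_le fun x _ ↦
    mul_le_mul_of_nonneg_left (hle x) (hd.pos x).le).mp htotal x (mem_univ x)
  exact mul_left_cancel₀ (hd.pos x).ne' heq

lemma surjOn_neighborSet_of_isPerronVector (hu : IsPerronVector G r u)
    (hd : IsPerronVector H r d) (f : H →g G) (hf : Function.Injective f) (x : W) :
    Set.SurjOn f (H.neighborSet x) (G.neighborSet (f x)) := by
  classical
  intro y hy
  by_contra hmem
  have hlt : ∑ z ∈ (H.neighborFinset x).image f, u z < ∑ z ∈ G.neighborFinset (f x), u z := by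
    refine sum_lt_sum_of_subset (i := y) ?_ (by simpa using hy) (by simpa using hmem) (hu.pos y)
      fun z _ _ ↦ (hu.pos z).le
    simpa [image_subset_iff] using fun y ↦ f.map_adj
  rw [sum_image hf.injOn, sum_neighborFinset_comp_eq hu hd f hf, hu.sum_neighborFinset] at hlt
  exact hlt.false

theorem nonempty_iso_of_isContained [Nonempty W] (hG : G.Preconnected)
    (hu : IsPerronVector G r u) (hd : IsPerronVector H r d) (h : H ⊑ G) : Nonempty (G ≃g H) := by
  obtain ⟨f, hinj⟩ := h
  have hlocal := surjOn_neighborSet_of_isPerronVector hu hd f hinj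
  have hsurj := surjective_of_surjOn_neighborSet hG hlocal
  let e : H ≃g G := ⟨Equiv.ofBijective f ⟨hinj, hsurj⟩, fun {x y} ↦ ⟨fun hxy ↦ ?_, f.map_adj⟩⟩
  · exact ⟨e.symm⟩
  · obtain ⟨z, hxz, hzy⟩ := hlocal x hxy
    rwa [← hinj hzy]

end Containment

section Dtilde

variable {V : Type*} {G : SimpleGraph V}

instance (n : ℕ) : DecidableRel (DtildeGraph n).Adj :=
  inferInstanceAs (DecidableRel (SimpleGraph.fromRel _).Adj)

lemma dtildeGraph_adj_iff {m : ℕ} {i j : Fin (m + 4 + 1)} : (DtildeGraph (m + 4)).Adj i j ↔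
    ((i : ℕ) ≤ 1 ∧ (j : ℕ) = 2) ∨ ((j : ℕ) ≤ 1 ∧ (i : ℕ) = 2) ∨
      (2 ≤ (i : ℕ) ∧ (j : ℕ) = i + 1 ∧ (j : ℕ) ≤ m + 2) ∨
      (2 ≤ (j : ℕ) ∧ (i : ℕ) = j + 1 ∧ (i : ℕ) ≤ m + 2) ∨
      ((i : ℕ) = m + 2 ∧ m + 3 ≤ (j : ℕ)) ∨ ((j : ℕ) = m + 2 ∧ m + 3 ≤ (i : ℕ)) := by
  simp only [DtildeGraph, SimpleGraph.fromRel_adj, ne_eq, Fin.ext_iff]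
  omega

/-- The multiplicities of the null root of affine type `D`: `1` at the four leaves of
`DtildeGraph (m + 4)` and `2` along its central path. -/
def dtildeMark (m : ℕ) (i : Fin (m + 4 + 1)) : ℕ :=
  if (i : ℕ) ≤ 1 ∨ m + 3 ≤ (i : ℕ) then 1 else 2

lemma sum_dtildeMark_lt {m : ℕ} {x : Fin (m + 4 + 1)} (h2 : 2 ≤ (x : ℕ)) (hm : (x : ℕ) ≤ m + 2) :
    ∑ y ∈ (DtildeGraph (m + 4)).neighborFinset x with y < x, dtildeMark m y = 2 := by
  by_cases hx : (x : ℕ) = 2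
  · have hN : {y ∈ (DtildeGraph (m + 4)).neighborFinset x | y < x} =
        {⟨0, by omega⟩, ⟨1, by omega⟩} := by
      ext y
      simp only [mem_filter, SimpleGraph.mem_neighborFinset, dtildeGraph_adj_iff, Fin.lt_def,
        mem_insert, mem_singleton, Fin.ext_iff]
      omega
    rw [hN, sum_pair (by simp)]
    simp [dtildeMark]
  · have hN : {y ∈ (DtildeGraph (m + 4)).neighborFinset x | y < x} = {⟨x - 1, by omega⟩} := by
      ext y
      simp only [mem_filter, SimpleGraph.mem_neighborFinset, dtildeGraph_adj_iff, Fin.lt_def,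
        mem_singleton, Fin.ext_iff]
      omega
    rw [hN, sum_singleton, dtildeMark, if_neg (by dsimp only; omega)]

lemma sum_dtildeMark_not_lt {m : ℕ} {x : Fin (m + 4 + 1)} (h2 : 2 ≤ (x : ℕ))
    (hm : (x : ℕ) ≤ m + 2) :
    ∑ y ∈ (DtildeGraph (m + 4)).neighborFinset x with ¬y < x, dtildeMark m y = 2 := by
  by_cases hx : (x : ℕ) = m + 2
  · have hN : {y ∈ (DtildeGraph (m + 4)).neighborFinset x | ¬y < x} =
        {⟨m + 3, by omega⟩, ⟨m + 4, by omega⟩} := by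
      ext y
      simp only [mem_filter, SimpleGraph.mem_neighborFinset, dtildeGraph_adj_iff, Fin.lt_def,
        mem_insert, mem_singleton, Fin.ext_iff]
      omega
    rw [hN, sum_pair (by simp)]
    simp [dtildeMark]
  · have hN : {y ∈ (DtildeGraph (m + 4)).neighborFinset x | ¬y < x} =
        {⟨x + 1, by omega⟩} := by
      ext y
      simp only [mem_filter, SimpleGraph.mem_neighborFinset, dtildeGraph_adj_iff, Fin.lt_def,
        mem_singleton, Fin.ext_iff]
      omega
    rw [hN, sum_singleton, dtildeMark, if_neg (by dsimp only; omega)]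

lemma isPerronVector_dtildeGraph (m : ℕ) :
    IsPerronVector (DtildeGraph (m + 4)) 2 fun i ↦ dtildeMark m i := by
  refine mod_cast isPerronVector_natCast (k := 2) (fun x ↦ ?_) fun x ↦ ?_
  · rw [dtildeMark]
    split_ifs <;> norm_num
  rcases Nat.lt_or_ge x 2 with hlow | hlow
  · have hN : (DtildeGraph (m + 4)).neighborFinset x = {⟨2, by omega⟩} := by
      ext y
      simp only [SimpleGraph.mem_neighborFinset, dtildeGraph_adj_iff, mem_singleton, Fin.ext_iff]
      omega
    rw [hN, sum_singleton, dtildeMark, dtildeMark, if_neg (by simp), if_pos (by omega)]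
  rcases Nat.lt_or_ge (m + 2) x with hhigh | hhigh
  · have hN : (DtildeGraph (m + 4)).neighborFinset x = {⟨m + 2, by omega⟩} := by
      ext y
      simp only [SimpleGraph.mem_neighborFinset, dtildeGraph_adj_iff, mem_singleton, Fin.ext_iff]
      omega
    rw [hN, sum_singleton, dtildeMark, dtildeMark, if_neg (by simp), if_pos (by omega)]
  · rw [← sum_filter_add_sum_filter_not _ (· < x), sum_dtildeMark_lt hlow hhigh,
      sum_dtildeMark_not_lt hlow hhigh, dtildeMark, if_neg (by omega)]

lemma dtildeGraph_isContained_of_nodup {x y a a' b b' : V} {p : G.Walk x y} (ha : G.Adj x a)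
    (ha' : G.Adj x a') (hb : G.Adj y b) (hb' : G.Adj y b')
    (h : (a :: a' :: (p.support ++ [b, b'])).Nodup) : DtildeGraph (p.length + 4) ⊑ G := by
  obtain ⟨l, hl⟩ : ∃ l, a :: a' :: (p.support ++ [b, b']) = l := ⟨_, rfl⟩
  have hlen : l.length = p.length + 4 + 1 := by simp [← hl]
  have hpath (j : ℕ) (hj : j ≤ p.length) : l[j + 2] = p.getVert j := by
    simp [← hl, List.getElem_append_left, p.support_getElem_eq_getVert, hj]
  have hadj (i j : ℕ) (hi : i < l.length) (hj : j < l.length)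
      (hij : (i ≤ 1 ∧ j = 2) ∨ (2 ≤ i ∧ j = i + 1 ∧ j ≤ p.length + 2) ∨
        (i = p.length + 2 ∧ p.length + 3 ≤ j)) : G.Adj l[i] l[j] := by
    rcases hij with ⟨h1, rfl⟩ | ⟨h1, rfl, h2⟩ | ⟨rfl, h1⟩
    · rw [hpath 0 (by omega), p.getVert_zero]
      obtain rfl | rfl : i = 0 ∨ i = 1 := by omega
      · simpa [← hl] using ha.symm
      · simpa [← hl] using ha'.symm
    · obtain ⟨k, rfl⟩ := Nat.exists_eq_add_of_le' h1
      rw [hpath k (by omega), hpath (k + 1) (by omega)]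
      exact p.adj_getVert_succ (by omega)
    · rw [hpath p.length le_rfl, p.getVert_length]
      obtain rfl | rfl : j = p.length + 3 ∨ j = p.length + 4 := by omega
      · simpa [← hl] using hb
      · simpa [← hl] using hb'
  refine ⟨⟨⟨fun i ↦ l[i], fun {i j} hij ↦ ?_⟩, fun i j hij ↦ ?_⟩⟩
  · rw [dtildeGraph_adj_iff] at hij
    by_cases hlt : i < j
    · exact hadj i j (by omega) (by omega) (by omega)
    · exact (hadj j i (by omega) (by omega) (by omega)).symm
  · exact Fin.ext ((List.Nodup.getElem_inj_iff (hl ▸ h)).mp hij)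

lemma exists_pair_adj_notMem [G.LocallyFinite] {x : V} {s : Finset V} (h : #s + 2 ≤ G.degree x) :
    ∃ a a', a ≠ a' ∧ (G.Adj x a ∧ a ∉ s) ∧ G.Adj x a' ∧ a' ∉ s := by
  classical
  have hcard : 1 < #(G.neighborFinset x \ s) := by
    have := le_card_sdiff s (G.neighborFinset x)
    rw [SimpleGraph.card_neighborFinset_eq_degree] at this
    omega
  obtain ⟨a, ha, a', ha', hne⟩ := one_lt_card.mp hcard
  exact ⟨a, a', hne, by simpa using ha, by simpa using ha'⟩

lemma dtildeGraph_isContained_of_four_le_degree [G.LocallyFinite] {c : V} (hc : 4 ≤ G.degree c) :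
    DtildeGraph 4 ⊑ G := by
  classical
  have hempty : #(∅ : Finset V) + 2 ≤ G.degree c := by rw [card_empty]; omega
  obtain ⟨a, a', hne, ⟨ha, -⟩, ha', -⟩ := exists_pair_adj_notMem hempty
  have hpair : #{a, a'} + 2 ≤ G.degree c := by rwa [card_pair hne]
  obtain ⟨b, b', hne', ⟨hb, hbs⟩, hb', hbs'⟩ := exists_pair_adj_notMem hpair
  refine dtildeGraph_isContained_of_nodup (p := .nil) ha ha' hb hb' ?_
  have := ha.ne
  have := ha'.ne
  have := hb.ne
  have := hb'.ne
  grind [SimpleGraph.Walk.support_nil, List.nodup_cons]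

lemma dtildeGraph_isContained_of_three_le_degree [G.LocallyFinite] (hG : G.IsTree) {x y : V}
    (hxy : x ≠ y) (hx : 3 ≤ G.degree x) (hy : 3 ≤ G.degree y) :
    ∃ m, DtildeGraph (m + 4) ⊑ G := by
  obtain ⟨p, hp⟩ := (hG.connected.preconnected x y).exists_isPath
  have hnil : ¬p.Nil := SimpleGraph.Walk.not_nil_of_ne hxy
  obtain ⟨a, a', hne, ⟨ha, has⟩, ha', has'⟩ := exists_pair_adj_notMem (s := {p.snd}) hx
  obtain ⟨b, b', hne', ⟨hb, hbs⟩, hb', hbs'⟩ := exists_pair_adj_notMem (s := {p.penultimate}) hy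
  rw [mem_singleton] at has has' hbs hbs'
  have hstart {z : V} (hz : G.Adj x z) (hzs : z ≠ p.snd) : z ∉ p.support :=
    fun h ↦ hzs (hG.isAcyclic.eq_snd_of_adj_start hp hz h)
  have hend {z : V} (hz : G.Adj y z) (hzs : z ≠ p.penultimate) : z ∉ p.support :=
    fun h ↦ hzs (hG.isAcyclic.eq_penultimate_of_adj_end hp hz h)
  have hdisj {z w : V} (hz : G.Adj x z) (hzs : z ≠ p.snd) (hw : G.Adj y w)
      (hws : w ≠ p.penultimate) : z ≠ w := by
    rintro rfl
    have hpath : (p.cons hz.symm).IsPath := hp.cons (hstart hz hzs)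
    have := hG.isAcyclic.eq_penultimate_of_adj_end hpath hw (by simp)
    rw [SimpleGraph.Walk.penultimate_cons_of_not_nil _ _ hnil] at this
    exact hws this
  refine ⟨p.length, dtildeGraph_isContained_of_nodup ha ha' hb hb' ?_⟩
  have := hp.support_nodup
  have := hstart ha has
  grind [List.nodup_append, List.nodup_cons]

end Dtilde

section Spider

variable {V W ι : Type*} {G : SimpleGraph V} {H : SimpleGraph W} {length : ι → ℕ} {leg : W → ι}
  {depth : W → ℕ}

/-- Coordinates exhibiting `H` as a subgraph of the spider (tree with one branch vertex) whose leg
`i` has `length i` edges: the vertex `x` lies on the leg `leg x`, at distance `depth x` from the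
centre. The leg assigned to the centre itself is immaterial. -/
structure IsSpider (H : SimpleGraph W) (length : ι → ℕ) (leg : W → ι) (depth : W → ℕ) : Prop where
  depth_le : ∀ x, depth x ≤ length (leg x)
  eq_of_depth_eq : ∀ x y, depth x = depth y → (depth x = 0 ∨ leg x = leg y) → x = y
  depth_of_adj : ∀ x y, H.Adj x y → depth y = depth x + 1 ∨ depth x = depth y + 1
  leg_of_adj : ∀ x y, H.Adj x y → depth x ≠ 0 → depth y ≠ 0 → leg x = leg y

lemma eq_and_snd_eq_of_getVert_eq (hG : G.IsAcyclic) {c x y : V} {p : G.Walk c x} {q : G.Walk c y}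
    (hp : p.IsPath) (hq : q.IsPath) {i j : ℕ} (hi : i ≤ p.length) (hj : j ≤ q.length)
    (h : p.getVert i = q.getVert j) : i = j ∧ (i ≠ 0 → p.snd = q.snd) := by
  have hwalk : (p.take i).copy rfl h = q.take j := Subtype.mk.inj <|
    (hG.subsingleton_path c (q.getVert j)).elim
      ⟨_, (SimpleGraph.Walk.isPath_copy _ rfl h).mpr (hp.take i)⟩ ⟨_, hq.take j⟩
  have hlen : i = j := by
    simpa [SimpleGraph.Walk.take_length, hi, hj] using congrArg SimpleGraph.Walk.length hwalk
  refine ⟨hlen, fun h0 ↦ ?_⟩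
  have hsnd := congrArg SimpleGraph.Walk.snd hwalk
  simpa [SimpleGraph.Walk.take_getVert, SimpleGraph.Walk.snd, ← hlen,
    Nat.one_le_iff_ne_zero.mpr h0] using hsnd

lemma IsSpider.isContained (hH : IsSpider H length leg depth) (hG : G.IsAcyclic) {c : V}
    {e : ι → V} {p : ∀ i, G.Walk c (e i)} (hp : ∀ i, (p i).IsPath)
    (hsnd : Function.Injective fun i ↦ (p i).snd) (hlen : length ≤ fun i ↦ (p i).length) :
    H ⊑ G := by
  have hle (x : W) : depth x ≤ (p (leg x)).length := (hH.depth_le x).trans (hlen _)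
  have hval {x y : W} (h : depth x = 0 ∨ leg x = leg y) :
      (p (leg x)).getVert (depth x) = (p (leg y)).getVert (depth x) := by
    rcases h with h | h
    · rw [h, SimpleGraph.Walk.getVert_zero, SimpleGraph.Walk.getVert_zero]
    · rw [h]
  have hadj {x y : W} (hxy : H.Adj x y) (hd : depth y = depth x + 1) :
      G.Adj ((p (leg x)).getVert (depth x)) ((p (leg y)).getVert (depth y)) := by
    rw [hval (y := y) (by grind [hH.leg_of_adj x y hxy]), hd]
    exact (p (leg y)).adj_getVert_succ (by have := hle y; omega)
  refine ⟨⟨⟨fun x ↦ (p (leg x)).getVert (depth x), fun {x y} hxy ↦ ?_⟩, fun x y hxy ↦ ?_⟩⟩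
  · exact (hH.depth_of_adj x y hxy).elim (hadj hxy) fun hd ↦ (hadj hxy.symm hd).symm
  · obtain ⟨hd, hs⟩ := eq_and_snd_eq_of_getVert_eq hG (hp _) (hp _) (hle x) (hle y) hxy
    exact hH.eq_of_depth_eq x y hd (or_iff_not_imp_left.mpr fun h0 ↦ hsnd (hs h0))

end Spider

instance : DecidableRel E6tGraph.Adj :=
  inferInstanceAs (DecidableRel (SimpleGraph.fromRel _).Adj)

instance : DecidableRel E7tGraph.Adj :=
  inferInstanceAs (DecidableRel (SimpleGraph.fromRel _).Adj)

instance : DecidableRel E8tGraph.Adj :=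
  inferInstanceAs (DecidableRel (SimpleGraph.fromRel _).Adj)

lemma isPerronVector_e6tGraph :
    IsPerronVector E6tGraph 2 fun x ↦ (![1, 2, 3, 2, 1, 2, 1] x : ℕ) :=
  mod_cast isPerronVector_natCast (k := 2) (by decide) (by decide)

lemma isPerronVector_e7tGraph :
    IsPerronVector E7tGraph 2 fun x ↦ (![1, 2, 3, 4, 3, 2, 1, 2] x : ℕ) :=
  mod_cast isPerronVector_natCast (k := 2) (by decide) (by decide)

lemma isPerronVector_e8tGraph :
    IsPerronVector E8tGraph 2 fun x ↦ (![2, 4, 6, 5, 4, 3, 2, 1, 3] x : ℕ) :=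
  mod_cast isPerronVector_natCast (k := 2) (by decide) (by decide)

lemma isSpider_e6tGraph :
    IsSpider E6tGraph ![2, 2, 2] ![(0 : Fin 3), 0, 0, 1, 1, 2, 2] ![2, 1, 0, 1, 2, 1, 2] := by
  constructor <;> decide

lemma isSpider_e7tGraph :
    IsSpider E7tGraph ![1, 3, 3] ![(1 : Fin 3), 1, 1, 0, 2, 2, 2, 0] ![3, 2, 1, 0, 1, 2, 3, 1] := by
  constructor <;> decide

lemma isSpider_e8tGraph :
    IsSpider E8tGraph ![1, 2, 5] ![(1 : Fin 3), 1, 0, 2, 2, 2, 2, 2, 0]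
      ![2, 1, 0, 1, 2, 3, 4, 5, 1] := by
  constructor <;> decide

section Leg

variable {V : Type*} {G : SimpleGraph V} [G.LocallyFinite] {u : V → ℝ} {b c x y : V}
  {p : G.Walk x y}

lemma neighborFinset_getVert_succ [DecidableEq V] (hp : p.IsPath) {i : ℕ} (hi : i + 2 ≤ p.length)
    (hdeg : G.degree (p.getVert (i + 1)) ≤ 2) :
    G.neighborFinset (p.getVert (i + 1)) = {p.getVert i, p.getVert (i + 2)} := by
  have hne : p.getVert i ≠ p.getVert (i + 2) := fun h ↦ by
    have := hp.getVert_injOn (by grind) (by grind) h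
    omega
  refine (eq_of_subset_of_card_le ?_ ?_).symm
  · simp only [insert_subset_iff, singleton_subset_iff, SimpleGraph.mem_neighborFinset]
    exact ⟨(p.adj_getVert_succ (by omega)).symm, p.adj_getVert_succ (by omega)⟩
  · rwa [card_pair hne]

lemma IsPerronVector.apply_getVert_eq (hu : IsPerronVector G 2 u) (hp : p.IsPath)
    (hdeg : ∀ i, 0 < i → i < p.length → G.degree (p.getVert i) ≤ 2) {i : ℕ} (hi : i ≤ p.length) :
    u (p.getVert i) = u x - i * (u x - u p.snd) := by
  classical
  induction i using Nat.twoStepInduction with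
  | zero => simp
  | one => simp [SimpleGraph.Walk.snd]
  | more i ih ih' =>
    have hsum := hu.sum_neighborFinset (p.getVert (i + 1))
    rw [neighborFinset_getVert_succ hp hi (hdeg _ (by omega) (by omega)),
      sum_pair (fun h ↦ by have := hp.getVert_injOn (by grind) (by grind) h; omega),
      ih (by omega), ih' (by omega)] at hsum
    push_cast at hsum ⊢
    linarith

lemma exists_isPath_to_leaf_of_adj [Finite V] (hG : G.IsAcyclic) (h : G.Adj c b) :
    ∃ (e : V) (p : G.Walk c e), p.IsPath ∧ ¬p.Nil ∧ p.snd = b ∧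
      G.neighborFinset e = {p.penultimate} := by
  have := Fintype.ofFinite V
  by_contra! hmax
  have hlong (n : ℕ) : ∃ (e : V) (p : G.Walk c e),
      p.IsPath ∧ ¬p.Nil ∧ p.snd = b ∧ n ≤ p.length := by
    induction n with
    | zero => exact ⟨b, h.toWalk, by simp [h.ne], by simp, by simp, by simp⟩
    | succ n ih =>
      obtain ⟨e, p, hp, hnil, hsnd, hlen⟩ := ih
      have hpos := SimpleGraph.Walk.not_nil_iff_lt_length.mp hnil
      obtain ⟨w, hw, hwp⟩ : ∃ w, G.Adj e w ∧ w ≠ p.penultimate := by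
        by_contra! hall
        refine hmax e p hp hnil hsnd (eq_singleton_iff_unique_mem.mpr ⟨?_, ?_⟩)
        · simpa using (p.adj_penultimate hnil).symm
        · simpa using hall
      have hpath : (p.concat hw).IsPath :=
        hp.concat (fun hmem ↦ hwp (hG.eq_penultimate_of_adj_end hp hw hmem)) hw
      refine ⟨w, p.concat hw, hpath, SimpleGraph.Walk.not_nil_iff_lt_length.mpr (by simp), ?_,
        by simpa using hlen⟩
      rw [SimpleGraph.Walk.concat_eq_append, SimpleGraph.Walk.snd,
        SimpleGraph.Walk.getVert_append', if_pos (Nat.one_le_of_lt hpos)]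
      exact hsnd
  obtain ⟨e, p, hp, -, -, hlen⟩ := hlong (Fintype.card V)
  exact hp.length_lt.not_ge hlen

lemma IsPerronVector.exists_isPath_eq_length_add_one_mul [Finite V] (hG : G.IsAcyclic)
    (hu : IsPerronVector G 2 u) (hc : ∀ x ≠ c, G.degree x ≤ 2) (h : G.Adj c b) :
    ∃ (e : V) (p : G.Walk c e), p.IsPath ∧ p.snd = b ∧ u c = (p.length + 1) * (u c - u b) := by
  obtain ⟨e, p, hp, hnil, rfl, hN⟩ := exists_isPath_to_leaf_of_adj hG h
  have hdeg (i : ℕ) (h0 : 0 < i) (hi : i < p.length) : G.degree (p.getVert i) ≤ 2 := by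
    refine hc _ fun h ↦ ?_
    rw [hp.getVert_eq_start_iff hi.le] at h
    omega
  have hend := hu.sum_neighborFinset e
  have hpos := SimpleGraph.Walk.not_nil_iff_lt_length.mp hnil
  have he := hu.apply_getVert_eq hp hdeg le_rfl
  have hpen := hu.apply_getVert_eq hp hdeg (i := p.length - 1) (by omega)
  rw [p.getVert_length] at he
  rw [hN, sum_singleton, SimpleGraph.Walk.penultimate, hpen, he, Nat.cast_pred hpos] at hend
  exact ⟨e, p, hp, rfl, by linarith⟩

lemma IsPerronVector.exists_isPath_sum_inv_eq_degree_sub_two [Finite V] (hG : G.IsAcyclic)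
    (hu : IsPerronVector G 2 u) (hc : ∀ x ≠ c, G.degree x ≤ 2) :
    ∃ (e : G.neighborSet c → V) (p : ∀ b, G.Walk c (e b)), (∀ b, (p b).IsPath) ∧
      (∀ b, (p b).snd = b) ∧ ∑ b, ((p b).length + 1 : ℝ)⁻¹ = G.degree c - 2 := by
  choose e p hp hsnd hlen using fun b : G.neighborSet c ↦
    hu.exists_isPath_eq_length_add_one_mul hG hc b.2
  refine ⟨e, p, hp, hsnd, ?_⟩
  have hpos := hu.pos c
  have hinv (b : G.neighborSet c) : ((p b).length + 1 : ℝ)⁻¹ = (u c - u b) / u c := by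
    rw [eq_div_iff hpos.ne', inv_mul_eq_iff_eq_mul₀ (by positivity)]
    exact hlen b
  have hsum : ∑ b : G.neighborSet c, u b = 2 * u c := by
    rw [← hu.sum_neighborFinset c, SimpleGraph.neighborFinset, ← sum_set_coe]
  simp only [hinv, ← sum_div, sum_sub_distrib, hsum, sum_const, card_univ,
    SimpleGraph.card_neighborSet_eq_degree, nsmul_eq_mul]
  field_simp

end Leg

section Classification

variable {V ι : Type*}

lemma card_eq_three_of_sum_eq_card_sub_two [Fintype ι] {a : ι → ℝ} (ha : ∀ i, 0 < a i)
    (hcard : Fintype.card ι ≤ 3) (h : ∑ i, a i = Fintype.card ι - 2) : Fintype.card ι = 3 := by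
  have htwo : 2 ≤ Fintype.card ι := by
    have hnonneg := sum_nonneg fun i (_ : i ∈ univ) ↦ (ha i).le
    rw [h, sub_nonneg] at hnonneg
    exact_mod_cast hnonneg
  have : Nonempty ι := Fintype.card_pos_iff.mp (by omega)
  have hlt := sum_pos (fun i _ ↦ ha i) univ_nonempty
  rw [h, sub_pos] at hlt
  exact hcard.antisymm (by exact_mod_cast hlt)

lemma exists_equiv_fin_monotone [Fintype ι] {α : Type*} [LinearOrder α] {n : ℕ} (l : ι → α)
    (h : Fintype.card ι = n) : ∃ σ : Fin n ≃ ι, Monotone (l ∘ σ) := by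
  let e := (Fintype.equivFinOfCardEq h).symm
  exact ⟨(Tuple.sort (l ∘ e)).trans e, Tuple.monotone_sort (l ∘ e)⟩

lemma le_of_sum_inv_add_one_eq_one {l : Fin 3 → ℕ} (hl : Monotone l)
    (h : ∑ i, (l i + 1 : ℝ)⁻¹ = 1) :
    ![2, 2, 2] ≤ l ∨ ![1, 3, 3] ≤ l ∨ ![1, 2, 5] ≤ l := by
  have h01 : l 0 ≤ l 1 := hl (by decide)
  have h12 : l 1 ≤ l 2 := hl (by decide)
  have hnat : (l 1 + 1) * (l 2 + 1) + (l 0 + 1) * (l 2 + 1) + (l 0 + 1) * (l 1 + 1) =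
      (l 0 + 1) * (l 1 + 1) * (l 2 + 1) := by
    rw [Fin.sum_univ_three] at h
    field_simp at h
    rify
    linarith
  have hle (a b c : ℕ) : ![a, b, c] ≤ l ↔ a ≤ l 0 ∧ b ≤ l 1 ∧ c ≤ l 2 := by
    simp [Pi.le_def, Fin.forall_fin_succ]
  simp only [hle]
  rcases lt_or_ge 1 (l 0) with h0 | h0
  · omega
  obtain h0 | h0 : l 0 = 0 ∨ l 0 = 1 := by omega
  · rw [h0] at hnat
    linarith
  rw [h0] at hnat
  rcases lt_or_ge 2 (l 1) with h1 | h1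
  · omega
  obtain h1 | h1 : l 1 = 1 ∨ l 1 = 2 := by omega
  all_goals
    rw [h1] at hnat
    omega

lemma e6tGraph_or_e7tGraph_or_e8tGraph_isContained_of_degree_le_two [Finite V] {G : SimpleGraph V}
    [G.LocallyFinite] (hG : G.IsAcyclic) {u : V → ℝ} (hu : IsPerronVector G 2 u) {c : V}
    (hc : G.degree c ≤ 3) (hne : ∀ x ≠ c, G.degree x ≤ 2) :
    E6tGraph ⊑ G ∨ E7tGraph ⊑ G ∨ E8tGraph ⊑ G := by
  obtain ⟨e, p, hp, hsnd, hsum⟩ := hu.exists_isPath_sum_inv_eq_degree_sub_two hG hne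
  rw [← SimpleGraph.card_neighborSet_eq_degree] at hc hsum
  have hcard := card_eq_three_of_sum_eq_card_sub_two (fun b ↦ by positivity) hc hsum
  obtain ⟨σ, hσ⟩ := exists_equiv_fin_monotone (fun b ↦ (p b).length) hcard
  have hinj : Function.Injective fun i ↦ (p (σ i)).snd := by
    simp only [hsnd]
    exact Subtype.val_injective.comp σ.injective
  have hone : ∑ i, ((p (σ i)).length + 1 : ℝ)⁻¹ = 1 := by
    rw [σ.sum_comp fun b ↦ ((p b).length + 1 : ℝ)⁻¹, hsum, hcard]
    norm_num
  exact (le_of_sum_inv_add_one_eq_one hσ hone).imp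
    (isSpider_e6tGraph.isContained hG (fun i ↦ hp (σ i)) hinj)
    (Or.imp (isSpider_e7tGraph.isContained hG (fun i ↦ hp (σ i)) hinj)
      (isSpider_e8tGraph.isContained hG (fun i ↦ hp (σ i)) hinj))

theorem exists_isContained_of_isPerronVector_two [Finite V] {G : SimpleGraph V} [G.LocallyFinite]
    (hG : G.IsTree) {u : V → ℝ} (hu : IsPerronVector G 2 u) :
    (∃ m, DtildeGraph (m + 4) ⊑ G) ∨ E6tGraph ⊑ G ∨ E7tGraph ⊑ G ∨ E8tGraph ⊑ G := by
  by_cases! hfour : ∃ c, 4 ≤ G.degree c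
  · obtain ⟨c, hc⟩ := hfour
    exact .inl ⟨0, dtildeGraph_isContained_of_four_le_degree hc⟩
  by_cases! htwo : ∃ x y, x ≠ y ∧ 3 ≤ G.degree x ∧ 3 ≤ G.degree y
  · obtain ⟨x, y, hxy, hx, hy⟩ := htwo
    exact .inl (dtildeGraph_isContained_of_three_le_degree hG hxy hx hy)
  obtain ⟨c, hc⟩ : ∃ c, ∀ x ≠ c, G.degree x ≤ 2 := by
    by_cases! hthree : ∃ c, 3 ≤ G.degree c
    · obtain ⟨c, hc⟩ := hthree
      exact ⟨c, fun x hx ↦ Nat.le_of_lt_succ (htwo c x hx.symm hc)⟩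
    · have := hG.connected.nonempty
      exact ⟨Classical.arbitrary V, fun x _ ↦ Nat.le_of_lt_succ (hthree x)⟩
  exact .inr (e6tGraph_or_e7tGraph_or_e8tGraph_isContained_of_degree_le_two hG.isAcyclic hu
    (Nat.le_of_lt_succ (hfour c)) hc)

theorem exists_isPerronVector_two_iff [Finite V] {G : SimpleGraph V} [G.LocallyFinite]
    (hG : G.IsTree) :
    (∃ u, IsPerronVector G 2 u) ↔ (∃ n, 4 ≤ n ∧ Nonempty (G ≃g DtildeGraph n)) ∨
      Nonempty (G ≃g E6tGraph) ∨ Nonempty (G ≃g E7tGraph) ∨ Nonempty (G ≃g E8tGraph) := by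
  constructor
  · rintro ⟨u, hu⟩
    have hconn := hG.connected.preconnected
    refine (exists_isContained_of_isPerronVector_two hG hu).imp ?_ (Or.imp ?_ (Or.imp ?_ ?_))
    · rintro ⟨m, hm⟩
      exact ⟨m + 4, by omega,
        nonempty_iso_of_isContained hconn hu (isPerronVector_dtildeGraph m) hm⟩
    · exact nonempty_iso_of_isContained hconn hu isPerronVector_e6tGraph
    · exact nonempty_iso_of_isContained hconn hu isPerronVector_e7tGraph
    · exact nonempty_iso_of_isContained hconn hu isPerronVector_e8tGraph
  · rintro (⟨n, hn, ⟨e⟩⟩ | ⟨⟨e⟩⟩ | ⟨⟨e⟩⟩ | ⟨⟨e⟩⟩)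
    · obtain ⟨m, rfl⟩ := Nat.exists_eq_add_of_le' hn
      exact ⟨_, (isPerronVector_dtildeGraph m).comp_iso e⟩
    · exact ⟨_, isPerronVector_e6tGraph.comp_iso e⟩
    · exact ⟨_, isPerronVector_e7tGraph.comp_iso e⟩
    · exact ⟨_, isPerronVector_e8tGraph.comp_iso e⟩

end Classification

/-- A finite tree has index r = 2 iff it is isomorphic to one of the
extended Dynkin diagrams D̃ₙ (n ≥ 4), Ẽ₆, Ẽ₇, Ẽ₈. -/
theorem stmt17 {V : Type*} [Fintype V] (G : SimpleGraph V) [DecidableRel G.Adj]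
    (hT : G.IsTree)
    (r : ℝ)
    (hr : IsEigen (G.adjMatrix ℝ) r ∧ ∀ μ, IsEigen (G.adjMatrix ℝ) μ → μ ≤ r) :
    r = 2 ↔
      (∃ n, 4 ≤ n ∧ Nonempty (G ≃g DtildeGraph n)) ∨
      Nonempty (G ≃g E6tGraph) ∨ Nonempty (G ≃g E7tGraph) ∨ Nonempty (G ≃g E8tGraph) := by
  have hmax : IsGreatest {μ | IsEigen (G.adjMatrix ℝ) μ} r := hr
  calc
    r = 2 ↔ IsGreatest {μ | IsEigen (G.adjMatrix ℝ) μ} 2 :=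
      ⟨fun h ↦ h ▸ hmax, hmax.unique⟩
    _ ↔ ∃ u, IsPerronVector G 2 u := isGreatest_isEigen_iff_exists_isPerronVector hT.connected
    _ ↔ _ := exists_isPerronVector_two_iff hT
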